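/- arXiv:math/0006147 — 3 statements merged into one kernel-verified Lean document; each statement's English description precedes it below -/
import Mathlib

section
/- Let U ⊆ ℂ be open, I ⊆ ℝ an open interval, h : U → ℂ smooth, and f : I × U → ℂ a smooth family with ∂f_t nowhere vanishing on U for each t. Set μ_t = ∂̄f_t/∂f_t, v_t = (∂_t f_t)/∂f_t, s_t = (∂_t ∂f_t)/∂f_t, and ω_t = (∂²f_t/∂f_t)·∂μ_t + 2μ_t·h. Define A_t = s_t·(∂²f_t/∂f_t) − 2(h − {f_t,z})·v_t and B_t = s_t·(∂̄∂f_t/∂f_t) + 2(∂²f_t/∂f_t)·(∂_t μ_t) − 2(h − {f_t,z})·v_t·μ_t. Then the variation of the Polyakov density satisfies ∂_t ω_t = −2·(∂̄h − D_h μ_t)·v_t + (∂B_t − ∂̄A_t) on U; i.e., the variation of the bulk 2-form equals the source term a = −2(∂̄h − D_h μ)·(∂_t f/∂f) dz∧dz̄ plus the exterior derivative of the 1-form η = δ(log ∂f)·d(log ∂f) + 2·∂(log ∂f)·(∂_tμ) dz̄ − 2(h − {f,z})·(∂_t f/∂f)·(dz + μ dz̄), with the convention d(A dz + B dz̄) =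 (∂B − ∂̄A) dz∧dz̄. -/
/-!
Write `p = ∂f`, `L = ∂p/p`, `M = ∂̄p/p`, `s = ∂_t p/p`, and `S = ∂L - L²/2` for the Schwarzian.
The equations `∂̄f = μ ∂f` and `∂_t f = v ∂f` say that `∂̄` and `∂_t` act on `f` as the vector
fields `μ ∂` and `v ∂`. Since the three derivatives commute, differentiating these equations gives
`M = ∂μ + μL`, `∂_t μ = ∂̄v + v ∂μ - μ ∂v` and `∂̄S = μ ∂S + 2S ∂μ + ∂³μ`, while commuting
derivatives of `log p` gives `∂̄L = ∂M`, `∂_t L = ∂s` and `∂_t M = ∂̄s`. Hence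
`∂(sM + 2L ∂_t μ) - ∂̄(sL) = ∂_t (L ∂μ) + 2S ∂_t μ`, and the terms of `η` containing `h - S`
contribute `2(h - S) ∂_t μ + 2v (∂̄h - D_h μ)`.

This is a computation with three commuting derivations of a commutative ring. The ring of germs of
smooth functions at a point of `ℝ × ℂ` is closed under all the operations involved, so that the
computation applies there without any differentiability side conditions.
-/

open Complex MeasureTheory

/-- The Wirtinger derivative ∂u = (u_x − i·u_y)/2 of a function `u : ℂ → ℂ`. -/
noncomputable def wd (u : ℂ → ℂ) : ℂ → ℂ :=
  fun z => (fderiv ℝ u z 1 - Complex.I * fderiv ℝ u z Complex.I) / 2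

/-- The conjugate Wirtinger derivative ∂̄u = (u_x + i·u_y)/2. -/
noncomputable def wdbar (u : ℂ → ℂ) : ℂ → ℂ :=
  fun z => (fderiv ℝ u z 1 + Complex.I * fderiv ℝ u z Complex.I) / 2

/-- The Schwarzian derivative {f,z} = ∂³f/∂f − (3/2)·(∂²f/∂f)² of a smooth map. -/
noncomputable def schwarz (f : ℂ → ℂ) : ℂ → ℂ :=
  fun z => wd (wd (wd f)) z / wd f z - (3/2) * (wd (wd f) z / wd f z)^2

/-- The Schwarzian derivative S(g) = g'''/g' − (3/2)·(g''/g')² of a holomorphic map. -/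
noncomputable def schwarzD (g : ℂ → ℂ) : ℂ → ℂ :=
  fun z => deriv (deriv (deriv g)) z / deriv g z - (3/2) * (deriv (deriv g) z / deriv g z)^2

/-- The operator ∂̄_μ^{(k)} u = ∂̄u − μ·∂u − k·(∂μ)·u. -/
noncomputable def dbarMu (μ : ℂ → ℂ) (k : ℤ) (u : ℂ → ℂ) : ℂ → ℂ :=
  fun z => wdbar u z - μ z * wd u z - (k : ℂ) * wd μ z * u z

/-- The third-order operator D_h u = ∂³u + 2h·∂u + (∂h)·u. -/
noncomputable def Dop (h u : ℂ → ℂ) : ℂ → ℂ :=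
  fun z => wd (wd (wd u)) z + 2 * h z * wd u z + wd h z * u z

/-- The Lie derivative on weight-2 quantities: L_v q = v·∂q + 2·(∂v)·q. -/
noncomputable def lieD (v q : ℂ → ℂ) : ℂ → ℂ :=
  fun z => v z * wd q z + 2 * wd v z * q z

/-! ### Transport along commuting derivations -/

section Transport

variable {k R : Type*} [CommRing k] [CommRing R] [Algebra k R]
  {D D₁ D₂ P Q T : Derivation k R R} {p F a b h v s μ K L M : R}

lemma logDeriv_comm (hp : IsRightRegular p) (hcomm : D₁ (D₂ p) = D₂ (D₁ p))
    (ha : D₁ p = a * p) (hb : D₂ p = b * p) : D₁ b = D₂ a := by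
  apply hp
  rw [ha, hb] at hcomm
  simp only [Derivation.leibniz, smul_eq_mul, ha, hb] at hcomm
  linear_combination hcomm

lemma deriv_deriv_eq_of_logDeriv (hL : D p = L * p) : D (D p) = (D L + L ^ 2) * p := by
  rw [hL, Derivation.leibniz, hL, smul_eq_mul, smul_eq_mul]
  ring

lemma deriv_transport (hcomm : D (P F) = P (D F)) (ha : D F = a * P F)
    (hL : P (P F) = L * P F) : D (P F) = (P a + a * L) * P F := by
  rw [hcomm, ha, Derivation.leibniz, hL, smul_eq_mul, smul_eq_mul]
  ring

lemma transport_coeff_comm (hp : IsRightRegular (P F)) (h₁₂ : D₁ (D₂ F) = D₂ (D₁ F))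
    (h₁ : D₁ (P F) = P (D₁ F)) (h₂ : D₂ (P F) = P (D₂ F))
    (ha : D₁ F = a * P F) (hb : D₂ F = b * P F) :
    D₁ b = D₂ a + a * P b - b * P a := by
  apply hp
  rw [ha, hb, Derivation.leibniz, Derivation.leibniz, h₁, h₂, ha, hb] at h₁₂
  simp only [Derivation.leibniz, smul_eq_mul] at h₁₂
  linear_combination h₁₂

/-- `2 * P L - L ^ 2` is twice the Schwarzian derivative of `F`; its doubling avoids dividing by `2`
in the ring. -/
lemma schwarzian_transport (hp : IsRightRegular (P F)) (hcomm : ∀ x, D (P x) = P (D x))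
    (ha : D F = a * P F) (hL : P (P F) = L * P F) :
    D (2 * P L - L ^ 2) =
      a * P (2 * P L - L ^ 2) + 2 * P a * (2 * P L - L ^ 2) + 2 * P (P (P a)) := by
  have hDL : D L = P (P a + a * L) :=
    logDeriv_comm hp (hcomm _) (deriv_transport (hcomm F) ha hL) hL
  simp only [two_mul, pow_two, map_add, map_sub, Derivation.leibniz, smul_eq_mul, hcomm, hDL]
  ring

lemma polyakov_logDeriv_terms (hp : IsRightRegular (P F)) (hQP : ∀ x, Q (P x) = P (Q x))
    (hTP : ∀ x, T (P x) = P (T x)) (hTQ : ∀ x, T (Q x) = Q (T x))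
    (hμ : Q F = μ * P F) (hs : T (P F) = s * P F)
    (hL : P (P F) = L * P F) (hM : Q (P F) = M * P F) :
    P (s * M + 2 * L * T μ) - Q (s * L) = T (L * P μ) + (2 * P L - L ^ 2) * T μ := by
  have hM_eq : M = P μ + μ * L := hp (hM.symm.trans (deriv_transport (hQP F) hμ hL))
  have hQL : Q L = P M := logDeriv_comm hp (hQP _) hM hL
  have hTL : T L = P s := logDeriv_comm hp (hTP _) hs hL
  have hTM : T M = Q s := logDeriv_comm hp (hTQ _) hs hM
  have hQs : Q s = P (T μ) + T μ * L + μ * P s := by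
    rw [← hTM, hM_eq, map_add, Derivation.leibniz, hTP, hTL, smul_eq_mul, smul_eq_mul]
    ring
  simp only [two_mul, map_add, Derivation.leibniz, smul_eq_mul, hQL, hTL, hTP, hQs]
  rw [hM_eq]
  ring

lemma quadratic_differential_terms (hTμ : T μ = Q v + v * P μ - μ * P v) :
    P (K * v * μ) - Q (K * v) = v * (μ * P K + 2 * K * P μ - Q K) - K * T μ := by
  simp only [Derivation.leibniz, smul_eq_mul, hTμ]
  ring

theorem polyakov_variation (hp : IsRightRegular (P F)) (hQP : ∀ x, Q (P x) = P (Q x))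
    (hTP : ∀ x, T (P x) = P (T x)) (hTQ : ∀ x, T (Q x) = Q (T x))
    (hμ : Q F = μ * P F) (hv : T F = v * P F) (hs : T (P F) = s * P F)
    (hL : P (P F) = L * P F) (hM : Q (P F) = M * P F) (hK : K = 2 * h - (2 * P L - L ^ 2))
    (hh : T h = 0) :
    T (L * P μ + 2 * μ * h) =
      -2 * (Q h - (P (P (P μ)) + 2 * h * P μ + P h * μ)) * v +
        (P (s * M + 2 * L * T μ - K * v * μ) - Q (s * L - K * v)) := by
  have hTμ : T μ = Q v + v * P μ - μ * P v :=
    transport_coeff_comm hp (hTQ F) (hTP F) (hQP F) hv hμ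
  have hQK : μ * P K + 2 * K * P μ - Q K =
      2 * (P (P (P μ)) + 2 * h * P μ + P h * μ - Q h) := by
    rw [hK, map_sub P (2 * h), map_sub Q (2 * h), schwarzian_transport hp hQP hμ hL]
    simp only [two_mul h, map_add]
    ring
  have hTh : T (2 * μ * h) = 2 * h * T μ := by
    simp only [two_mul, map_add, Derivation.leibniz, smul_eq_mul, hh]
    ring
  have hlog := polyakov_logDeriv_terms hp hQP hTP hTQ hμ hs hL hM
  have hquad := quadratic_differential_terms (K := K) hTμ
  rw [hQK] at hquad
  rw [map_add T, hTh, map_sub P, map_sub Q]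
  linear_combination hquad - hlog - T μ * hK

end Transport

/-! ### Germs of smooth functions -/

section Smooth

open Filter Topology ContDiff

section Germ

variable {k A α : Type*} [CommSemiring k] [Semiring A] [Algebra k A] {l : Filter α}

/-- Germs of functions valued in an algebra form an algebra, with the pointwise scalar action. -/
noncomputable instance germAlgebra : Algebra k (Germ l A) :=
  Algebra.ofModule
    (fun c φ ψ => Germ.inductionOn₂ φ ψ fun f g => congrArg Germ.ofFun (smul_mul_assoc c f g))
    (fun c φ ψ => Germ.inductionOn₂ φ ψ fun f g => congrArg Germ.ofFun (mul_smul_comm c f g))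

end Germ

section DirectionalDerivative

variable {E G : Type*} [NormedAddCommGroup E] [NormedSpace ℝ E] [NormedAddCommGroup G]
  [NormedSpace ℝ G] {x : E}

lemma contDiffAt_fderiv_apply {g : E → G} (hg : ContDiffAt ℝ ∞ g x) (u : E) :
    ContDiffAt ℝ ∞ (fun y => fderiv ℝ g y u) x :=
  (hg.fderiv_right (by simp)).clm_apply contDiffAt_const

lemma eventually_differentiableAt {g : E → G} (hg : ContDiffAt ℝ ∞ g x) :
    ∀ᶠ y in 𝓝 x, DifferentiableAt ℝ g y :=
  ((hg.of_le (m := 1) (by simp)).eventually (by simp)).mono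
    fun _ hy => hy.differentiableAt (by simp)

/-- The algebra of germs at `x` of complex-valued functions that are smooth over `ℝ` at `x`. -/
def SmoothGerm (x : E) : Subalgebra ℂ (Germ (𝓝 x) ℂ) where
  carrier := {φ | ∃ g : E → ℂ, ContDiffAt ℝ ∞ g x ∧ (g : Germ (𝓝 x) ℂ) = φ}
  mul_mem' := by
    rintro _ _ ⟨f, hf, rfl⟩ ⟨g, hg, rfl⟩
    exact ⟨f * g, hf.mul hg, Germ.coe_mul f g⟩
  add_mem' := by
    rintro _ _ ⟨f, hf, rfl⟩ ⟨g, hg, rfl⟩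
    exact ⟨f + g, hf.add hg, Germ.coe_add f g⟩
  algebraMap_mem' c := by
    refine ⟨fun _ => c • 1, contDiffAt_const, ?_⟩
    rw [Algebra.algebraMap_eq_smul_one]
    rfl

namespace SmoothGerm

/-- The germ at `x` of a function smooth at `x`. -/
def mk (g : E → ℂ) (hg : ContDiffAt ℝ ∞ g x) : SmoothGerm x := ⟨g, g, hg, rfl⟩

lemma exists_eq_mk (φ : SmoothGerm x) : ∃ g hg, φ = mk g hg := by
  obtain ⟨_, g, hg, rfl⟩ := φ
  exact ⟨g, hg, rfl⟩

lemma mk_eq_mk {f g : E → ℂ} {hf : ContDiffAt ℝ ∞ f x} {hg : ContDiffAt ℝ ∞ g x} :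
    mk f hf = mk g hg ↔ f =ᶠ[𝓝 x] g :=
  Subtype.ext_iff.trans Germ.coe_eq

/-- The derivative of smooth germs in the direction of the constant vector `u`, as a derivation. -/
noncomputable def dir (u : E) : Derivation ℂ (SmoothGerm x) (SmoothGerm x) :=
  Derivation.mk'
    { toFun φ := ⟨Germ.map' (fun g y => fderiv ℝ g y u)
          (fun _ _ h => (h.fderiv (𝕜 := ℝ)).mono fun _ hy => congrArg (· u) hy) φ.1, by
        obtain ⟨_, g, hg, rfl⟩ := φ
        exact ⟨_, contDiffAt_fderiv_apply hg u, rfl⟩⟩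
      map_add' φ ψ := by
        obtain ⟨f, hf, rfl⟩ := exists_eq_mk φ
        obtain ⟨g, hg, rfl⟩ := exists_eq_mk ψ
        refine Subtype.ext (Germ.coe_eq.2 ?_)
        filter_upwards [eventually_differentiableAt hf, eventually_differentiableAt hg]
          with y hfy hgy
        exact congrArg (· u) (fderiv_add hfy hgy)
      map_smul' c φ := by
        obtain ⟨f, hf, rfl⟩ := exists_eq_mk φ
        refine Subtype.ext (Germ.coe_eq.2 ?_)
        filter_upwards [eventually_differentiableAt hf] with y hfy
        exact congrArg (· u) (fderiv_const_smul hfy c) }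
    fun φ ψ => by
      obtain ⟨f, hf, rfl⟩ := exists_eq_mk φ
      obtain ⟨g, hg, rfl⟩ := exists_eq_mk ψ
      refine Subtype.ext (Germ.coe_eq.2 ?_)
      filter_upwards [eventually_differentiableAt hf, eventually_differentiableAt hg]
        with y hfy hgy
      exact congrArg (· u) (fderiv_mul hfy hgy)

lemma dir_mk (u : E) {g : E → ℂ} (hg : ContDiffAt ℝ ∞ g x) :
    dir u (mk g hg) = mk (fun y => fderiv ℝ g y u) (contDiffAt_fderiv_apply hg u) :=
  rfl

lemma dir_comm (u w : E) (φ : SmoothGerm x) : dir u (dir w φ) = dir w (dir u φ) := by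
  obtain ⟨g, hg, rfl⟩ := exists_eq_mk φ
  simp only [dir_mk, mk_eq_mk]
  filter_upwards [(hg.of_le (m := 2) (WithTop.coe_le_coe.2 le_top)).eventually (by simp)] with y hy
  have hd : DifferentiableAt ℝ (fderiv ℝ g) y :=
    (hy.fderiv_right (m := 1) (by norm_num)).differentiableAt (by simp)
  simp only [fderiv_clm_apply hd (differentiableAt_const _)]
  simpa using (hy.isSymmSndFDerivAt (by simp)).eq u w

end SmoothGerm

end DirectionalDerivative

/-! ### The derivations `∂`, `∂̄` and `∂_t` of families -/

namespace SmoothGerm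

variable {x : ℝ × ℂ}

/-- The Wirtinger derivative `∂` in the second variable, as a derivation of smooth germs. -/
noncomputable def dz : Derivation ℂ (SmoothGerm x) (SmoothGerm x) :=
  (1 / 2 : ℂ) • (dir (x := x) ((0, 1) : ℝ × ℂ) - Complex.I • dir (x := x) ((0, Complex.I) : ℝ × ℂ))

/-- The conjugate Wirtinger derivative `∂̄` in the second variable, as a derivation of smooth
germs. -/
noncomputable def dzbar : Derivation ℂ (SmoothGerm x) (SmoothGerm x) :=
  (1 / 2 : ℂ) • (dir (x := x) ((0, 1) : ℝ × ℂ) + Complex.I • dir (x := x) ((0, Complex.I) : ℝ × ℂ))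

/-- The derivative `∂_t` in the first variable, as a derivation of smooth germs. -/
noncomputable def dt : Derivation ℂ (SmoothGerm x) (SmoothGerm x) := dir ((1, 0) : ℝ × ℂ)

lemma dzbar_dz (φ : SmoothGerm x) : dzbar (dz φ) = dz (dzbar φ) := by
  simp only [dz, dzbar, Derivation.smul_apply, Derivation.add_apply, Derivation.sub_apply, map_add,
    map_sub, Derivation.map_smul, dir_comm ((0, Complex.I) : ℝ × ℂ) (0, 1)]
  module

lemma dt_dz (φ : SmoothGerm x) : dt (dz φ) = dz (dt φ) := by
  simp only [dz, dt, Derivation.smul_apply, Derivation.sub_apply, map_sub, Derivation.map_smul,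
    dir_comm ((1, 0) : ℝ × ℂ)]

lemma dt_dzbar (φ : SmoothGerm x) : dt (dzbar φ) = dzbar (dt φ) := by
  simp only [dzbar, dt, Derivation.smul_apply, Derivation.add_apply, map_add, Derivation.map_smul,
    dir_comm ((1, 0) : ℝ × ℂ)]

end SmoothGerm

open SmoothGerm

/-- The family `g` has germ `φ` at `x = (t, z)`, as a function of both variables. It is used to
translate identities between smooth germs into identities between derivatives of families. -/
def IsGermOf {x : ℝ × ℂ} (g : ℝ → ℂ → ℂ) (φ : SmoothGerm x) : Prop :=
  ((fun y => g y.1 y.2 : ℝ × ℂ → ℂ) : Germ (𝓝 x) ℂ) = φ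

namespace IsGermOf

variable {x : ℝ × ℂ} {f g μ : ℝ → ℂ → ℂ} {h : ℂ → ℂ} {φ ψ F H m : SmoothGerm x}

lemma of_mk (hg : ContDiffAt ℝ ∞ (fun y : ℝ × ℂ => g y.1 y.2) x) : IsGermOf g (mk _ hg) := rfl

lemma exists_eq_mk (hg : IsGermOf g φ) :
    ∃ hg' : ContDiffAt ℝ ∞ (fun y : ℝ × ℂ => g y.1 y.2) x, φ = mk _ hg' := by
  obtain ⟨k, hk, rfl⟩ := SmoothGerm.exists_eq_mk φ
  have hgk := Germ.coe_eq.1 hg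
  exact ⟨hk.congr_of_eventuallyEq hgk, mk_eq_mk.2 hgk.symm⟩

lemma unique (hφ : IsGermOf g φ) (hψ : IsGermOf g ψ) : φ = ψ := Subtype.ext (hφ.symm.trans hψ)

lemma apply_eq (hf : IsGermOf f φ) (hg : IsGermOf g φ) : f x.1 x.2 = g x.1 x.2 :=
  (Germ.coe_eq.1 (hf.trans hg.symm)).eq_of_nhds

lemma zero : IsGermOf (fun _ _ => 0) (0 : SmoothGerm x) := rfl

lemma one : IsGermOf (fun _ _ => 1) (1 : SmoothGerm x) := rfl

lemma ofNat (n : ℕ) [n.AtLeastTwo] :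
    IsGermOf (fun _ _ => OfNat.ofNat n) (OfNat.ofNat n : SmoothGerm x) := rfl

lemma neg (hf : IsGermOf f φ) : IsGermOf (fun t z => -f t z) (-φ) :=
  congrArg Neg.neg hf

lemma add (hf : IsGermOf f φ) (hg : IsGermOf g ψ) : IsGermOf (fun t z => f t z + g t z) (φ + ψ) :=
  congrArg₂ (· + ·) hf hg

lemma sub (hf : IsGermOf f φ) (hg : IsGermOf g ψ) : IsGermOf (fun t z => f t z - g t z) (φ - ψ) :=
  congrArg₂ (· - ·) hf hg

lemma mul (hf : IsGermOf f φ) (hg : IsGermOf g ψ) : IsGermOf (fun t z => f t z * g t z) (φ * ψ) :=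
  congrArg₂ (· * ·) hf hg

lemma const_mul (c : ℂ) (hf : IsGermOf f φ) : IsGermOf (fun t z => c * f t z) (c • φ) :=
  congrArg (c • ·) hf

lemma exists_div (hf : IsGermOf f φ) (hg : IsGermOf g ψ) (hg0 : g x.1 x.2 ≠ 0) :
    ∃ χ : SmoothGerm x, IsGermOf (fun t z => f t z / g t z) χ ∧ φ = χ * ψ := by
  obtain ⟨hf', rfl⟩ := hf.exists_eq_mk
  obtain ⟨hg', rfl⟩ := hg.exists_eq_mk
  refine ⟨_, of_mk (g := fun t z => f t z / g t z)
    (by simpa only [div_eq_mul_inv] using! hf'.mul (hg'.inv hg0)), Subtype.ext (Germ.coe_eq.2 ?_)⟩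
  filter_upwards [hg'.continuousAt.eventually_ne hg0] with y hy
  exact (div_mul_cancel₀ _ hy).symm

lemma isUnit (hg : IsGermOf g ψ) (hg0 : g x.1 x.2 ≠ 0) : IsUnit ψ := by
  obtain ⟨χ, -, hχ⟩ := one.exists_div hg hg0
  exact .of_mul_eq_one_right χ hχ.symm

lemma map_fderiv (hg : IsGermOf g φ) (u : ℂ) :
    IsGermOf (fun t z => fderiv ℝ (g t) z u) (dir (0, u) φ) := by
  obtain ⟨hg', rfl⟩ := hg.exists_eq_mk
  refine Germ.coe_eq.2 ?_
  filter_upwards [eventually_differentiableAt hg'] with ⟨t, z⟩ hy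
  have hslice := hy.hasFDerivAt.comp z (hasFDerivAt_prodMk_right (𝕜 := ℝ) t z)
  exact congrArg (· u) hslice.fderiv

lemma map_deriv (hg : IsGermOf g φ) : IsGermOf (fun t z => deriv (fun r => g r z) t) (dt φ) := by
  obtain ⟨hg', rfl⟩ := hg.exists_eq_mk
  refine Germ.coe_eq.2 ?_
  filter_upwards [eventually_differentiableAt hg'] with ⟨t, z⟩ hy
  have hslice := hy.hasFDerivAt.comp t (hasFDerivAt_prodMk_left (𝕜 := ℝ) t z)
  exact hslice.hasDerivAt.deriv

lemma map_wd (hg : IsGermOf g φ) : IsGermOf (fun t => wd (g t)) (dz φ) := by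
  convert ((hg.map_fderiv 1).sub ((hg.map_fderiv Complex.I).const_mul Complex.I)).const_mul (1 / 2)
    using 1
  · funext t z
    simp only [wd]
    ring
  · rfl

lemma map_wdbar (hg : IsGermOf g φ) : IsGermOf (fun t => wdbar (g t)) (dzbar φ) := by
  convert ((hg.map_fderiv 1).add ((hg.map_fderiv Complex.I).const_mul Complex.I)).const_mul (1 / 2)
    using 1
  · funext t z
    simp only [wdbar]
    ring
  · rfl

lemma map_Dop (hh : IsGermOf (fun _ => h) H) (hμ : IsGermOf μ m) :
    IsGermOf (fun t => Dop h (μ t)) (dz (dz (dz m)) + 2 * H * dz m + dz H * m) :=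
  (hμ.map_wd.map_wd.map_wd.add (((ofNat 2).mul hh).mul hμ.map_wd)).add (hh.map_wd.mul hμ)

lemma two_mul_schwarz {L : SmoothGerm x} (hf : IsGermOf f F) (hf0 : wd (f x.1) x.2 ≠ 0)
    (hL : IsGermOf (fun t z => wd (wd (f t)) z / wd (f t) z) L) (hF : dz (dz F) = L * dz F) :
    IsGermOf (fun t z => 2 * schwarz (f t) z) (2 * dz L - L ^ 2) := by
  have hp := hf.map_wd
  obtain ⟨N, hN, hpN⟩ := hp.map_wd.map_wd.exists_div hp hf0
  have hN_eq : N = dz L + L ^ 2 :=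
    (hp.isUnit hf0).isRegular.right (hpN.symm.trans (deriv_deriv_eq_of_logDeriv hF))
  convert ((ofNat 2).mul hN).sub ((ofNat 3).mul (hL.mul hL)) using 1
  · funext t z
    simp only [schwarz]
    ring
  · rw [hN_eq]
    ring

lemma dt_eq_zero (hh : IsGermOf (fun _ => h) H) : dt H = 0 := by
  have hdt := hh.map_deriv
  simp only [deriv_const] at hdt
  exact hdt.unique zero

end IsGermOf

end Smooth

open SmoothGerm IsGermOf in
theorem stmt14_general (h : ℂ → ℂ) (f : ℝ → ℂ → ℂ) (t : ℝ) (z : ℂ)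
    (hh : ContDiffAt ℝ (⊤ : ℕ∞) h z)
    (hf : ContDiffAt ℝ (⊤ : ℕ∞) (fun p : ℝ × ℂ => f p.1 p.2) (t, z))
    (hf' : wd (f t) z ≠ 0)
    (μ v s : ℝ → ℂ → ℂ)
    (hμ : μ = fun t z => wdbar (f t) z / wd (f t) z)
    (hv : v = fun t z => deriv (fun r => f r z) t / wd (f t) z)
    (hs : s = fun t z => deriv (fun r => wd (f r) z) t / wd (f t) z)
    (ω : ℝ → ℂ → ℂ)
    (hω : ω = fun t z => (wd (wd (f t)) z / wd (f t) z) * wd (μ t) z + 2 * μ t z * h z)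
    (A B : ℝ → ℂ → ℂ)
    (hA : A = fun t z => s t z * (wd (wd (f t)) z / wd (f t) z)
      - 2 * (h z - schwarz (f t) z) * v t z)
    (hB : B = fun t z => s t z * (wdbar (wd (f t)) z / wd (f t) z)
      + 2 * (wd (wd (f t)) z / wd (f t) z) * deriv (fun r => μ r z) t
      - 2 * (h z - schwarz (f t) z) * v t z * μ t z) :
    deriv (fun r => ω r z) t =
      -2 * (wdbar h z - Dop h (μ t) z) * v t z + (wd (B t) z - wdbar (A t) z) := by
  obtain ⟨F, gf⟩ : ∃ F : SmoothGerm (t, z), IsGermOf f F := ⟨_, of_mk hf⟩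
  obtain ⟨H, gh⟩ : ∃ H : SmoothGerm (t, z), IsGermOf (fun _ => h) H :=
    ⟨_, of_mk (hh.comp (t, z) contDiffAt_snd)⟩
  have gp := gf.map_wd
  have hp := (gp.isUnit hf').isRegular.right
  obtain ⟨μ', gμ, hμ'⟩ : ∃ μ' : SmoothGerm (t, z), IsGermOf μ μ' ∧ _ = μ' * dz F :=
    hμ ▸ gf.map_wdbar.exists_div gp hf'
  obtain ⟨v', gv, hv'⟩ : ∃ v' : SmoothGerm (t, z), IsGermOf v v' ∧ _ = v' * dz F :=
    hv ▸ gf.map_deriv.exists_div gp hf'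
  obtain ⟨s', gs, hs'⟩ : ∃ s' : SmoothGerm (t, z), IsGermOf s s' ∧ _ = s' * dz F :=
    hs ▸ gp.map_deriv.exists_div gp hf'
  obtain ⟨L, gL, hL⟩ := gp.map_wd.exists_div gp hf'
  obtain ⟨M, gM, hM⟩ := gp.map_wdbar.exists_div gp hf'
  have gK : IsGermOf (fun t z => 2 * (h z - schwarz (f t) z)) (2 * H - (2 * dz L - L ^ 2)) := by
    simpa only [← mul_sub] using ((ofNat 2).mul gh).sub (gf.two_mul_schwarz hf' gL hL)
  have gω : IsGermOf ω (L * dz μ' + 2 * μ' * H) :=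
    hω ▸ (gL.mul gμ.map_wd).add (((ofNat 2).mul gμ).mul gh)
  have gA : IsGermOf A (s' * L - (2 * H - (2 * dz L - L ^ 2)) * v') :=
    hA ▸ (gs.mul gL).sub (gK.mul gv)
  have gB : IsGermOf B (s' * M + 2 * L * dt μ' - (2 * H - (2 * dz L - L ^ 2)) * v' * μ') :=
    hB ▸ ((gs.mul gM).add (((ofNat 2).mul gL).mul gμ.map_deriv)).sub ((gK.mul gv).mul gμ)
  have gRHS := (((ofNat 2).neg.mul (gh.map_wdbar.sub (gh.map_Dop gμ))).mul gv).add
    (gB.map_wd.sub gA.map_wdbar)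
  have key := polyakov_variation hp dzbar_dz dt_dz dt_dzbar hμ' hv' hs' hL hM rfl gh.dt_eq_zero
  exact gω.map_deriv.apply_eq (key ▸ gRHS)

/-- variation of the Polyakov bulk density: for a smooth family `f t`
with `∂f_t ≠ 0` one has
`∂_t ω_t = −2·(∂̄h − D_h μ_t)·v_t + (∂B_t − ∂̄A_t)` on `U`. -/
theorem stmt14 (U : Set ℂ) (hU : IsOpen U) (I : Set ℝ)
    (hI : ∃ a b : ℝ, I = Set.Ioo a b)
    (h : ℂ → ℂ) (hh : ContDiffOn ℝ (⊤ : ℕ∞) h U)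
    (f : ℝ → ℂ → ℂ)
    (hf : ContDiffOn ℝ (⊤ : ℕ∞) (fun p : ℝ × ℂ => f p.1 p.2) (I ×ˢ U))
    (hf' : ∀ t ∈ I, ∀ z ∈ U, wd (f t) z ≠ 0)
    -- the Beltrami coefficient μ_t, the variation field v_t,
    -- and the auxiliary field s_t = ∂_t(∂f_t)/∂f_t
    (μ v s : ℝ → ℂ → ℂ)
    (hμ : μ = fun t z => wdbar (f t) z / wd (f t) z)
    (hv : v = fun t z => deriv (fun r => f r z) t / wd (f t) z)
    (hs : s = fun t z => deriv (fun r => wd (f r) z) t / wd (f t) z)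
    -- the Polyakov density ω_t
    (ω : ℝ → ℂ → ℂ)
    (hω : ω = fun t z => (wd (wd (f t)) z / wd (f t) z) * wd (μ t) z
                           + 2 * μ t z * h z)
    -- the components of the 1-form η_t = A_t dz + B_t dz̄
    (A B : ℝ → ℂ → ℂ)
    (hA : A = fun t z => s t z * (wd (wd (f t)) z / wd (f t) z)
                           - 2 * (h z - schwarz (f t) z) * v t z)
    (hB : B = fun t z => s t z * (wdbar (wd (f t)) z / wd (f t) z)
                           + 2 * (wd (wd (f t)) z / wd (f t) z)
                               * deriv (fun r => μ r z) t
                           - 2 * (h z - schwarz (f t) z) * v t z * μ t z) :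
    ∀ t ∈ I, ∀ z ∈ U,
      deriv (fun r => ω r z) t
        = -2 * (wdbar h z - Dop h (μ t) z) * v t z
            + (wd (B t) z - wdbar (A t) z) := by
  intro t ht z hz
  obtain ⟨a, b, rfl⟩ := hI
  exact stmt14_general h f t z (hh.contDiffAt (hU.mem_nhds hz))
    (hf.contDiffAt ((isOpen_Ioo.prod hU).mem_nhds ⟨ht, hz⟩)) (hf' t ht z hz) μ v s hμ hv hs ω hω
    A B hA hB
end

section
/- Let U ⊆ ℂ be open and let μ, h, h' : U → ℂ be smooth projective connection and Beltrami data satisfying both Euler–Lagrange equations D_h μ = ∂̄h and D_{h'} μ = ∂̄h' on U. Then ∂̄_μ^{(2)}(h − h') = 0 on U, i.e. ∂̄(h−h') − μ·∂(h−h') − 2·(∂μ)·(h−h') = 0; the difference of two critical projective connections is a quadratic differential holomorphic for the complex structure determined by μ. -/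
open Complex MeasureTheory

theorem wd_fun_sub {u v : ℂ → ℂ} {z : ℂ} (hu : DifferentiableAt ℝ u z)
    (hv : DifferentiableAt ℝ v z) : wd (fun w => u w - v w) z = wd u z - wd v z := by
  simp only [wd, fderiv_fun_sub hu hv, sub_apply]
  ring

theorem wdbar_fun_sub {u v : ℂ → ℂ} {z : ℂ} (hu : DifferentiableAt ℝ u z)
    (hv : DifferentiableAt ℝ v z) : wdbar (fun w => u w - v w) z = wdbar u z - wdbar v z := by
  simp only [wdbar, fderiv_fun_sub hu hv, sub_apply]
  ring

theorem dbarMu_two_eq_wdbar_sub_lieD (μ q : ℂ → ℂ) (z : ℂ) :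
    dbarMu μ 2 q z = wdbar q z - lieD μ q z := by
  simp only [dbarMu, lieD, Int.cast_ofNat]
  ring

/-- The third-order term `∂³u` does not involve the projective connection, so it cancels. -/
theorem dop_sub_dop_eq_lieD {h h' : ℂ → ℂ} (u : ℂ → ℂ) {z : ℂ} (hh : DifferentiableAt ℝ h z)
    (hh' : DifferentiableAt ℝ h' z) :
    Dop h u z - Dop h' u z = lieD u (fun w => h w - h' w) z := by
  simp only [Dop, lieD, wd_fun_sub hh hh']
  ring

theorem stmt15_general {μ h h' : ℂ → ℂ} {z : ℂ} (_hμ : ContDiffAt ℝ 3 μ z)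
    (hh : DifferentiableAt ℝ h z) (hh' : DifferentiableAt ℝ h' z)
    (hEL : Dop h μ z = wdbar h z) (hEL' : Dop h' μ z = wdbar h' z) :
    dbarMu μ 2 (fun w => h w - h' w) z = 0 :=
  calc
    dbarMu μ 2 (fun w => h w - h' w) z
      = wdbar (fun w => h w - h' w) z - lieD μ (fun w => h w - h' w) z :=
        dbarMu_two_eq_wdbar_sub_lieD ..
    _ = (wdbar h z - wdbar h' z) - (Dop h μ z - Dop h' μ z) := by
        rw [wdbar_fun_sub hh hh', dop_sub_dop_eq_lieD μ hh hh']
    _ = 0 := by rw [hEL, hEL', sub_self]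

/-- if `D_h μ = ∂̄h` and `D_{h'} μ = ∂̄h'` on `U`, then
`∂̄_μ^{(2)}(h − h') = 0` on `U`: the difference of two critical projective
connections is a μ-holomorphic quadratic differential. -/
theorem stmt15 (U : Set ℂ) (hU : IsOpen U) (μ h h' : ℂ → ℂ)
    (hμ : ContDiffOn ℝ (⊤ : ℕ∞) μ U) (hh : ContDiffOn ℝ (⊤ : ℕ∞) h U) (hh' : ContDiffOn ℝ (⊤ : ℕ∞) h' U)
    (hEL : ∀ z ∈ U, Dop h μ z = wdbar h z)
    (hEL' : ∀ z ∈ U, Dop h' μ z = wdbar h' z) :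
    ∀ z ∈ U, dbarMu μ 2 (fun w => h w - h' w) z = 0 := by
  intro z hz
  have hUz := hU.mem_nhds hz
  exact stmt15_general (contDiffAt_infty.mp (hμ.contDiffAt hUz) 3)
    ((hh.contDiffAt hUz).differentiableAt (by simp))
    ((hh'.contDiffAt hUz).differentiableAt (by simp)) (hEL z hz) (hEL' z hz)
end

section
/- Let U, U' ⊆ ℂ be open, g : U → U' a biholomorphism, V, V' ⊆ ℂ open, G : V → V' a biholomorphism, and let f₂ : U → V and f₁ : U' → V' be smooth with nowhere-vanishing Wirtinger derivatives satisfying f₁∘g = G∘f₂ on U. Let h₁ : U' → ℂ be smooth and set h₂ = (h₁∘g)·(g')² + S(g) on U. Then the push-forward densities h̃₁ = h₁ − {f₁,z} and h̃₂ = h₂ − {f₂,z} satisfy h̃₂ − (h̃₁∘g)·(g')² = (S(G)∘f₂)·(∂f₂)² on U; i.e., the push-forward of the projective connection h by the deformation map transforms as a projective connection on the deformed surface. -/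
/-!
The chain rule `∂(f ∘ g) = (∂f ∘ g)·∂g + (∂̄f ∘ g)·conj(∂̄g)` has only its first term as soon as
one of `f`, `g` is holomorphic. So the pre-Schwarzian `N(f) = ∂²f/∂f` satisfies
`N(f ∘ g) = (N(f) ∘ g)·∂g + N(g)`, and since `{f, z} = ∂N(f) − N(f)²/2`, the cocycle identity
`{f ∘ g, z} = ({f, ·} ∘ g)·(∂g)² + {g, z}` holds in both mixed cases. Applying it to the two sides
of `f₁ ∘ g = G ∘ f₂` and equating gives the transformation law.
-/

open Complex MeasureTheory

open Filter Topology ComplexConjugate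

section WirtingerCalculus

variable {f g u v : ℂ → ℂ} {z : ℂ}

lemma wd_congr (h : u =ᶠ[𝓝 z] v) : wd u =ᶠ[𝓝 z] wd v := by
  filter_upwards [h.fderiv (𝕜 := ℝ)] with w hw
  simp only [wd, hw]

lemma schwarz_congr (h : u =ᶠ[𝓝 z] v) : schwarz u z = schwarz v z := by
  have h₁ := wd_congr h
  have h₂ := wd_congr h₁
  simp only [schwarz, h₁.eq_of_nhds, h₂.eq_of_nhds, (wd_congr h₂).eq_of_nhds]

lemma wd_add (hu : DifferentiableAt ℝ u z) (hv : DifferentiableAt ℝ v z) :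
    wd (u + v) z = wd u z + wd v z := by
  simp only [wd, fderiv_add hu hv, add_apply]
  ring

lemma wd_mul (hu : DifferentiableAt ℝ u z) (hv : DifferentiableAt ℝ v z) :
    wd (u * v) z = wd u z * v z + u z * wd v z := by
  simp only [wd, fderiv_mul hu hv, add_apply, smul_apply, smul_eq_mul]
  ring

lemma wd_div (hu : DifferentiableAt ℝ u z) (hv : DifferentiableAt ℝ v z) (hvz : v z ≠ 0) :
    wd (u / v) z = (wd u z * v z - u z * wd v z) / v z ^ 2 := by
  have hdiv : DifferentiableAt ℝ (u / v) z := by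
    rw [div_eq_mul_inv]
    exact hu.mul (hv.inv hvz)
  have hcancel : u / v * v =ᶠ[𝓝 z] u := by
    filter_upwards [hv.continuousAt.eventually_ne hvz] with w hw
    exact div_mul_cancel₀ (u w) hw
  have hleibniz := wd_mul hdiv hv
  rw [(wd_congr hcancel).eq_of_nhds, Pi.div_apply] at hleibniz
  field_simp at hleibniz ⊢
  linear_combination -hleibniz

lemma fderiv_apply_eq_wd_add_wdbar (u : ℂ → ℂ) (z v : ℂ) :
    fderiv ℝ u z v = wd u z * v + wdbar u z * conj v := by
  have hv : v = v.re • (1 : ℂ) + v.im • I := by simp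
  have hlin : fderiv ℝ u z v = v.re * fderiv ℝ u z 1 + v.im * fderiv ℝ u z I := by
    conv_lhs => rw [hv, map_add, map_smul, map_smul, real_smul, real_smul]
  have hconj : conj v = v.re - v.im * I := by simp [Complex.ext_iff]
  rw [hlin, hconj, wd, wdbar]
  nth_rw 3 [← re_add_im v]
  linear_combination (v.im * fderiv ℝ u z I) * I_mul_I

lemma wd_comp_eq_add (hf : DifferentiableAt ℝ f (g z)) (hg : DifferentiableAt ℝ g z) :
    wd (f ∘ g) z = wd f (g z) * wd g z + wdbar f (g z) * conj (wdbar g z) := by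
  have hconj : conj (wdbar g z) = (conj (fderiv ℝ g z 1) - I * conj (fderiv ℝ g z I)) / 2 := by
    simp only [wdbar, map_div₀, map_add, map_mul, conj_I, map_ofNat]
    ring
  rw [hconj, wd, fderiv_comp z hf hg, ContinuousLinearMap.comp_apply,
    ContinuousLinearMap.comp_apply, fderiv_apply_eq_wd_add_wdbar f (g z) (fderiv ℝ g z 1),
    fderiv_apply_eq_wd_add_wdbar f (g z) (fderiv ℝ g z I), wd.eq_def g]
  ring

lemma fderiv_real_apply (hg : DifferentiableAt ℂ g z) (v : ℂ) :
    fderiv ℝ g z v = v * deriv g z := by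
  rw [hg.fderiv_restrictScalars ℝ, ContinuousLinearMap.coe_restrictScalars',
    fderiv_eq_smul_deriv, smul_eq_mul]

lemma wd_eq_deriv (hg : DifferentiableAt ℂ g z) : wd g z = deriv g z := by
  simp only [wd, fderiv_real_apply hg]
  linear_combination (-(deriv g z) / 2) * I_mul_I

lemma wdbar_eq_zero (hg : DifferentiableAt ℂ g z) : wdbar g z = 0 := by
  simp only [wdbar, fderiv_real_apply hg]
  linear_combination (deriv g z / 2) * I_mul_I

lemma wd_comp (hf : DifferentiableAt ℝ f (g z)) (hg : DifferentiableAt ℝ g z)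
    (hfg : DifferentiableAt ℂ f (g z) ∨ DifferentiableAt ℂ g z) :
    wd (f ∘ g) z = wd f (g z) * wd g z := by
  rw [wd_comp_eq_add hf hg]
  rcases hfg with hf | hg
  · rw [wdbar_eq_zero hf, zero_mul, add_zero]
  · rw [wdbar_eq_zero hg, map_zero, mul_zero, add_zero]

lemma eventually_analyticAt_or (hgc : ContinuousAt g z)
    (hfg : AnalyticAt ℂ f (g z) ∨ AnalyticAt ℂ g z) :
    ∀ᶠ w in 𝓝 z, AnalyticAt ℂ f (g w) ∨ AnalyticAt ℂ g w := by
  rcases hfg with hf | hg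
  · exact (hgc.eventually hf.eventually_analyticAt).mono fun _ => Or.inl
  · exact hg.eventually_analyticAt.mono fun _ => Or.inr

lemma eventually_wd_comp (hf : ContDiffAt ℝ 1 f (g z)) (hg : ContDiffAt ℝ 1 g z)
    (hfg : AnalyticAt ℂ f (g z) ∨ AnalyticAt ℂ g z) :
    wd (f ∘ g) =ᶠ[𝓝 z] (wd f ∘ g) * wd g := by
  filter_upwards [hg.continuousAt.eventually (hf.eventually (by simp)), hg.eventually (by simp),
    eventually_analyticAt_or hg.continuousAt hfg] with w hfw hgw hfgw
  exact wd_comp (hfw.differentiableAt one_ne_zero) (hgw.differentiableAt one_ne_zero)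
    (hfgw.imp AnalyticAt.differentiableAt AnalyticAt.differentiableAt)

lemma wd_eventuallyEq_deriv (hg : AnalyticAt ℂ g z) : wd g =ᶠ[𝓝 z] deriv g :=
  hg.eventually_analyticAt.mono fun _ hw => wd_eq_deriv hw.differentiableAt

lemma analyticAt_wd (hg : AnalyticAt ℂ g z) : AnalyticAt ℂ (wd g) z :=
  hg.deriv.congr (wd_eventuallyEq_deriv hg).symm

lemma contDiffAt_wd {m n : WithTop ℕ∞} (hu : ContDiffAt ℝ n u z) (hmn : m + 1 ≤ n) :
    ContDiffAt ℝ m (wd u) z := by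
  have hD : ContDiffAt ℝ m (fderiv ℝ u) z := hu.fderiv_right hmn
  exact ((hD.clm_apply contDiffAt_const).sub
    (contDiffAt_const.mul (hD.clm_apply contDiffAt_const))).div_const 2

lemma differentiableAt_wd (hu : ContDiffAt ℝ 2 u z) : DifferentiableAt ℝ (wd u) z :=
  (contDiffAt_wd hu (m := 1) (by norm_num)).differentiableAt one_ne_zero

lemma schwarz_eq_schwarzD (hg : AnalyticAt ℂ g z) : schwarz g z = schwarzD g z := by
  have h₁ := wd_eventuallyEq_deriv hg
  have h₂ := (wd_congr h₁).trans (wd_eventuallyEq_deriv hg.deriv)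
  have h₃ := (wd_congr h₂).trans (wd_eventuallyEq_deriv hg.deriv.deriv)
  simp only [schwarz, schwarzD, h₁.eq_of_nhds, h₂.eq_of_nhds, h₃.eq_of_nhds]

end WirtingerCalculus

section Cocycle

variable {f g : ℂ → ℂ} {z : ℂ}

/-- The pre-Schwarzian derivative `∂²f/∂f`, that is `∂ log ∂f`, of a smooth map; the Schwarzian is
a first-order expression in it. Its value is `0` where `∂f` vanishes. -/
noncomputable def preSchwarz (f : ℂ → ℂ) : ℂ → ℂ :=
  wd (wd f) / wd f

lemma analyticAt_preSchwarz (hf : AnalyticAt ℂ f z) (hf' : wd f z ≠ 0) :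
    AnalyticAt ℂ (preSchwarz f) z :=
  (analyticAt_wd (analyticAt_wd hf)).div (analyticAt_wd hf) hf'

lemma contDiffAt_preSchwarz {m n : WithTop ℕ∞} (hf : ContDiffAt ℝ n f z) (hmn : m + 1 + 1 ≤ n)
    (hf' : wd f z ≠ 0) : ContDiffAt ℝ m (preSchwarz f) z := by
  have hwd : ContDiffAt ℝ (m + 1) (wd f) z := contDiffAt_wd hf hmn
  rw [preSchwarz, div_eq_mul_inv]
  exact (contDiffAt_wd hwd le_rfl).mul ((hwd.of_le le_self_add).inv hf')

lemma schwarz_eq_wd_preSchwarz (hf : ContDiffAt ℝ 3 f z) (hf' : wd f z ≠ 0) :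
    schwarz f z = wd (preSchwarz f) z - preSchwarz f z ^ 2 / 2 := by
  have hwd : ContDiffAt ℝ 2 (wd f) z := contDiffAt_wd hf (by norm_num)
  have hwd₂ : ContDiffAt ℝ 1 (wd (wd f)) z := contDiffAt_wd hwd (by norm_num)
  rw [preSchwarz, wd_div (hwd₂.differentiableAt one_ne_zero) (hwd.differentiableAt two_ne_zero) hf',
    schwarz, Pi.div_apply]
  field_simp
  ring

lemma preSchwarz_comp (hf : ContDiffAt ℝ 2 f (g z)) (hg : ContDiffAt ℝ 2 g z)
    (hfg : AnalyticAt ℂ f (g z) ∨ AnalyticAt ℂ g z) (hf' : wd f (g z) ≠ 0) (hg' : wd g z ≠ 0) :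
    preSchwarz (f ∘ g) z = preSchwarz f (g z) * wd g z + preSchwarz g z := by
  have hwdf : DifferentiableAt ℝ (wd f) (g z) := differentiableAt_wd hf
  have hwdg : DifferentiableAt ℝ (wd g) z := differentiableAt_wd hg
  have hgd : DifferentiableAt ℝ g z := hg.differentiableAt two_ne_zero
  have hfg' : DifferentiableAt ℂ (wd f) (g z) ∨ DifferentiableAt ℂ g z :=
    hfg.imp (fun h => (analyticAt_wd h).differentiableAt) AnalyticAt.differentiableAt
  have hfirst : wd (f ∘ g) =ᶠ[𝓝 z] (wd f ∘ g) * wd g :=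
    eventually_wd_comp (hf.of_le one_le_two) (hg.of_le one_le_two) hfg
  have hsecond : wd (wd (f ∘ g)) z
      = wd (wd f) (g z) * wd g z * wd g z + wd f (g z) * wd (wd g) z := by
    rw [(wd_congr hfirst).eq_of_nhds, wd_mul (hwdf.comp z hgd) hwdg, wd_comp hwdf hgd hfg',
      Function.comp_apply]
  simp only [preSchwarz, Pi.div_apply, hsecond, hfirst.eq_of_nhds, Pi.mul_apply,
    Function.comp_apply]
  field_simp

lemma eventually_preSchwarz_comp (hf : ContDiffAt ℝ 2 f (g z)) (hg : ContDiffAt ℝ 2 g z)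
    (hfg : AnalyticAt ℂ f (g z) ∨ AnalyticAt ℂ g z) (hf' : wd f (g z) ≠ 0) (hg' : wd g z ≠ 0) :
    preSchwarz (f ∘ g) =ᶠ[𝓝 z] (preSchwarz f ∘ g) * wd g + preSchwarz g := by
  have hwdf : ∀ᶠ w in 𝓝 (g z), wd f w ≠ 0 :=
    (differentiableAt_wd hf).continuousAt.eventually_ne hf'
  have hwdg : ∀ᶠ w in 𝓝 z, wd g w ≠ 0 :=
    (differentiableAt_wd hg).continuousAt.eventually_ne hg'
  have hgc : ContinuousAt g z := hg.continuousAt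
  filter_upwards [hgc.eventually (hf.eventually (by simp)), hg.eventually (by simp),
    eventually_analyticAt_or hgc hfg, hgc.eventually hwdf, hwdg] with w hfw hgw hfgw hf'w hg'w
  exact preSchwarz_comp hfw hgw hfgw hf'w hg'w

theorem schwarz_comp (hf : ContDiffAt ℝ 3 f (g z)) (hg : ContDiffAt ℝ 3 g z)
    (hfg : AnalyticAt ℂ f (g z) ∨ AnalyticAt ℂ g z) (hf' : wd f (g z) ≠ 0) (hg' : wd g z ≠ 0) :
    schwarz (f ∘ g) z = schwarz f (g z) * wd g z ^ 2 + schwarz g z := by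
  have hf₂ : ContDiffAt ℝ 2 f (g z) := hf.of_le (by norm_num)
  have hg₂ : ContDiffAt ℝ 2 g z := hg.of_le (by norm_num)
  have hgd : DifferentiableAt ℝ g z := hg.differentiableAt three_ne_zero
  have hwdg : DifferentiableAt ℝ (wd g) z := differentiableAt_wd hg₂
  have hNf : DifferentiableAt ℝ (preSchwarz f) (g z) :=
    (contDiffAt_preSchwarz hf (m := 1) (by norm_num) hf').differentiableAt one_ne_zero
  have hNg : DifferentiableAt ℝ (preSchwarz g) z :=
    (contDiffAt_preSchwarz hg (m := 1) (by norm_num) hg').differentiableAt one_ne_zero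
  have hNfg : DifferentiableAt ℂ (preSchwarz f) (g z) ∨ DifferentiableAt ℂ g z :=
    hfg.imp (fun h => (analyticAt_preSchwarz h hf').differentiableAt) AnalyticAt.differentiableAt
  have hcomp : ContDiffAt ℝ 3 (f ∘ g) z := hf.comp z hg
  have hcomp' : wd (f ∘ g) z ≠ 0 := by
    rw [wd_comp (hf.differentiableAt three_ne_zero) hgd
      (hfg.imp AnalyticAt.differentiableAt AnalyticAt.differentiableAt)]
    exact mul_ne_zero hf' hg'
  have hwdN : wd (preSchwarz (f ∘ g)) z = wd (preSchwarz f) (g z) * wd g z * wd g z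
      + preSchwarz f (g z) * wd (wd g) z + wd (preSchwarz g) z := by
    rw [(wd_congr (eventually_preSchwarz_comp hf₂ hg₂ hfg hf' hg')).eq_of_nhds,
      wd_add ((hNf.comp z hgd).mul hwdg) hNg, wd_mul (hNf.comp z hgd) hwdg,
      wd_comp hNf hgd hNfg, Function.comp_apply]
  -- With this, the cross terms of `∂N(f ∘ g)` and `N(f ∘ g)²/2` are both `N(f)·N(g)·∂g`.
  have hwd₂g : wd (wd g) z = preSchwarz g z * wd g z := (div_mul_cancel₀ _ hg').symm
  rw [schwarz_eq_wd_preSchwarz hcomp hcomp', schwarz_eq_wd_preSchwarz hf hf',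
    schwarz_eq_wd_preSchwarz hg hg', hwdN, preSchwarz_comp hf₂ hg₂ hfg hf' hg', hwd₂g]
  ring

end Cocycle

theorem stmt16_general {g G f₁ f₂ h₁ h₂ : ℂ → ℂ} {z : ℂ}
    (hg : AnalyticAt ℂ g z) (hg' : deriv g z ≠ 0) (hG : AnalyticAt ℂ G (f₂ z))
    (hf₁ : ContDiffAt ℝ 3 f₁ (g z)) (hf₁' : wd f₁ (g z) ≠ 0) (hf₂ : ContDiffAt ℝ 3 f₂ z)
    (hint : f₁ ∘ g =ᶠ[𝓝 z] G ∘ f₂)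
    (hh₂ : h₂ z = h₁ (g z) * deriv g z ^ 2 + schwarzD g z) :
    (h₂ z - schwarz f₂ z) - (h₁ (g z) - schwarz f₁ (g z)) * deriv g z ^ 2
      = schwarzD G (f₂ z) * wd f₂ z ^ 2 := by
  have hgR : ContDiffAt ℝ 3 g z := hg.restrictScalars.contDiffAt
  have hGR : ContDiffAt ℝ 3 G (f₂ z) := hG.restrictScalars.contDiffAt
  have hwdg : wd g z = deriv g z := wd_eq_deriv hg.differentiableAt
  have hwdg' : wd g z ≠ 0 := hwdg ▸ hg'
  have hchain : wd f₁ (g z) * wd g z = wd G (f₂ z) * wd f₂ z := by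
    rw [← wd_comp (hf₁.differentiableAt three_ne_zero) (hgR.differentiableAt three_ne_zero)
        (.inr hg.differentiableAt), (wd_congr hint).eq_of_nhds,
      wd_comp (hGR.differentiableAt three_ne_zero) (hf₂.differentiableAt three_ne_zero)
        (.inl hG.differentiableAt)]
  obtain ⟨hG', hf₂'⟩ : wd G (f₂ z) ≠ 0 ∧ wd f₂ z ≠ 0 :=
    mul_ne_zero_iff.1 (hchain ▸ mul_ne_zero hf₁' hwdg')
  have hcocycle : schwarz f₁ (g z) * deriv g z ^ 2 + schwarzD g z
      = schwarzD G (f₂ z) * wd f₂ z ^ 2 + schwarz f₂ z := by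
    rw [← hwdg, ← schwarz_eq_schwarzD hg, ← schwarz_eq_schwarzD hG,
      ← schwarz_comp hf₁ hgR (.inr hg) hf₁' hwdg', ← schwarz_comp hGR hf₂ (.inl hG) hG' hf₂']
    exact schwarz_congr hint
  linear_combination hh₂ + hcocycle

/-- the push-forward densities `h̃ᵢ = hᵢ − {fᵢ,z}` satisfy
`h̃₂ − (h̃₁∘g)·(g')² = (S(G)∘f₂)·(∂f₂)²`: the push-forward of the projective
connection `h` transforms as a projective connection on the deformed surface. -/
theorem stmt16 (U U' V V' : Set ℂ)
    (hU : IsOpen U) (hU' : IsOpen U') (hV : IsOpen V) (hV' : IsOpen V')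
    -- g : U → U' biholomorphism
    (g : ℂ → ℂ) (hg : DifferentiableOn ℂ g U) (hgbij : Set.BijOn g U U')
    (hg' : ∀ z ∈ U, deriv g z ≠ 0)
    -- G : V → V' biholomorphism
    (G : ℂ → ℂ) (hG : DifferentiableOn ℂ G V) (hGbij : Set.BijOn G V V')
    (hG' : ∀ w ∈ V, deriv G w ≠ 0)
    -- the deformation maps f₂ : U → V and f₁ : U' → V'
    (f₁ f₂ : ℂ → ℂ)
    (hf₁ : ContDiffOn ℝ (⊤ : ℕ∞) f₁ U') (hf₁' : ∀ w ∈ U', wd f₁ w ≠ 0)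
    (hf₂ : ContDiffOn ℝ (⊤ : ℕ∞) f₂ U) (hf₂' : ∀ z ∈ U, wd f₂ z ≠ 0)
    (hf₂maps : Set.MapsTo f₂ U V)
    -- the intertwining relation f₁∘g = G∘f₂
    (hint : ∀ z ∈ U, f₁ (g z) = G (f₂ z))
    -- the projective connections
    (h₁ h₂ : ℂ → ℂ) (hh₁ : ContDiffOn ℝ (⊤ : ℕ∞) h₁ U')
    (hh₂ : ∀ z ∈ U, h₂ z = h₁ (g z) * (deriv g z)^2 + schwarzD g z) :
    ∀ z ∈ U,
      (h₂ z - schwarz f₂ z)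
          - (h₁ (g z) - schwarz f₁ (g z)) * (deriv g z)^2
        = schwarzD G (f₂ z) * (wd f₂ z)^2 := by
  intro z hz
  have hgz : g z ∈ U' := hgbij.mapsTo hz
  have hUz : U ∈ 𝓝 z := hU.mem_nhds hz
  exact stmt16_general (hg.analyticAt hUz) (hg' z hz) (hG.analyticAt (hV.mem_nhds (hf₂maps hz)))
    (mod_cast contDiffAt_infty.1 (hf₁.contDiffAt (hU'.mem_nhds hgz)) 3) (hf₁' _ hgz)
    (mod_cast contDiffAt_infty.1 (hf₂.contDiffAt hUz) 3) (eventually_of_mem hUz hint) (hh₂ z hz)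
end
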